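/- Let q be a real number with 0 < q and q ≠ 1, let h₁, l₁, l₂, α₁, λ be real numbers and t₁, t₂ nonzero reals, and let (i,i') = (1,2) or (i,i') = (2,1). Assume λ + α₁ = -N for some positive integer N (so (q^{λ+α₁};q)_n = 0 for all n > N and the series below is a finite sum), and assume q^{h₁-l_i+n}·t₁/t_i ≠ 1 for all integers 1 ≤ n ≤ N. Then the function g(x) = x^{λ} · Σ_{n=0}^{N} (q^{-λ-α₁+h₁-l_{i'}+1}·t₁/t_{i'})^n · (q^{λ+α₁};q)_n / ((q^{h₁-l_i+1}·t₁/t_i;q)_n (q;q)_n) · (x/(q^{l_i-1/2}t_i);q)_n satisfies the variant of the confluent q-hypergeometric equation of type (2,1) for all x > 0. -/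

import Mathlib

/-- The finite q-shifted factorial `(a;q)_n = ∏_{i=0}^{n-1} (1 - a q^i)`. -/
noncomputable def qPoch (q a : ℝ) (n : ℕ) : ℝ :=
  ∏ i ∈ Finset.range n, (1 - a * q ^ i)

/-- The variant of the confluent q-hypergeometric equation of type (2,1) (for `x > 0`). -/
def confEq21 (q h₁ l₁ l₂ α₁ lam t₁ t₂ : ℝ) (g : ℝ → ℝ) : Prop :=
  ∀ x : ℝ, 0 < x →
    (x - q ^ (l₁ - 1/2) * t₁) * (x - q ^ (l₂ - 1/2) * t₂) * g (q * x)
    - q ^ (-h₁ + l₁ + l₂ + 2 * lam - 1/2) * t₂ * (x - q ^ (h₁ + 1/2) * t₁) * g (x / q)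
    - (q ^ (-α₁) * x ^ 2
        - q ^ (l₁ + l₂ + lam - 1/2) * (q ^ (-l₂) * t₁ + (q ^ (-h₁) + q ^ (-l₁)) * t₂) * x
        + q ^ (l₁ + l₂ + lam) * (1 + q⁻¹) * t₁ * t₂) * g x = 0

/-!
The gauge factor `x ^ lam` turns the equation into a q-difference equation with coefficients
polynomial in `x`, determined by `a = q ^ (l₁ - 1/2) * t₁`, `b = q ^ (l₂ - 1/2) * t₂`,
`h = q ^ (h₁ + 1/2) * t₁` and `Q = q ^ (-(lam + α₁))`. Its operator is symmetric in `a` and `b`,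
which accounts for the two choices of indices. Up to the common factor `x ^ 2` it is bidiagonal on
the functions `(x / a; q)_n`, so annihilating `∑ n, c n * (x / a; q)_n` amounts to a first-order
recurrence for `c`, which the q-hypergeometric coefficients satisfy. For `Q = q ^ N` the series may
stop at `n = N`, because the diagonal entry `q ^ n - Q` vanishes there.
-/

lemma qPoch_succ (q a : ℝ) (n : ℕ) : qPoch q a (n + 1) = qPoch q a n * (1 - a * q ^ n) :=
  Finset.prod_range_succ _ n

lemma qPoch_succ' (q a : ℝ) (n : ℕ) : qPoch q a (n + 1) = (1 - a) * qPoch q (q * a) n := by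
  simp only [qPoch, Finset.prod_range_succ', pow_zero, mul_one, pow_succ', mul_left_comm a q,
    mul_assoc, mul_comm (1 - a)]

/-- The coefficient of index `n` in a q-hypergeometric series with upper parameter `A`, lower
parameter `B` and argument `z`. -/
noncomputable def qHypCoeff (q A B z : ℝ) (n : ℕ) : ℝ :=
  z ^ n * (qPoch q A n / (qPoch q B n * qPoch q q n))

lemma qHypCoeff_succ {q B : ℝ} {n : ℕ} (hq : 1 - q ^ (n + 1) ≠ 0) (hB : 1 - B * q ^ n ≠ 0)
    (A z : ℝ) :
    (1 - q ^ (n + 1)) * (1 - B * q ^ n) * qHypCoeff q A B z (n + 1)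
      = z * (1 - A * q ^ n) * qHypCoeff q A B z n := by
  simp only [qHypCoeff, qPoch_succ, pow_succ z, ← pow_succ' q]
  generalize 1 - q ^ (n + 1) = u at *
  generalize 1 - B * q ^ n = v at *
  field_simp

/-- The operator of the equation satisfied by `f` when `x ^ lam * f x` solves `confEq21`, written in
terms of the zeros `a`, `b` of the coefficient of `f (q * x)` and the zero `h` of the coefficient of
`f (x / q)`. The parameter `Q` stands for `q ^ (-(lam + α₁))`, and `h` is meant to be
nonzero. -/
noncomputable def confOp (q a b h Q : ℝ) : (ℝ → ℝ) →ₗ[ℝ] ℝ → ℝ where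
  toFun f x :=
    (x - a) * (x - b) * f (q * x) - a * b * q / h * (x - h) * f (x / q)
      - (Q * x ^ 2 - (a + b + a * b * q / h) * x + a * b * (1 + q)) * f x
  map_add' f g := by
    ext x
    simp only [Pi.add_apply]
    ring
  map_smul' c f := by
    ext x
    simp only [Pi.smul_apply, smul_eq_mul, RingHom.id_apply]
    ring

lemma confOp_apply (q a b h Q : ℝ) (f : ℝ → ℝ) (x : ℝ) :
    confOp q a b h Q f x =
      (x - a) * (x - b) * f (q * x) - a * b * q / h * (x - h) * f (x / q)
        - (Q * x ^ 2 - (a + b + a * b * q / h) * x + a * b * (1 + q)) * f x :=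
  rfl

lemma confOp_comm (q a b h Q : ℝ) : confOp q a b h Q = confOp q b a h Q := by
  ext f x
  simp only [confOp_apply]
  ring

lemma confOp_qPoch_zero (q a b Q x : ℝ) {h : ℝ} (hh : h ≠ 0) :
    confOp q a b h Q (fun x ↦ qPoch q (x / a) 0) x = x ^ 2 * (1 - Q) := by
  simp only [confOp_apply, qPoch, Finset.prod_range_zero]
  field_simp
  ring

lemma confOp_qPoch_succ {q a h : ℝ} (hq : q ≠ 0) (ha : a ≠ 0) (hh : h ≠ 0) (b Q x : ℝ) (n : ℕ) :
    confOp q a b h Q (fun x ↦ qPoch q (x / a) (n + 1)) x =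
      x ^ 2 * ((q ^ (n + 1) - Q) * qPoch q (x / a) (n + 1)
        + (1 - q ^ (n + 1)) * (b / h * (1 - h / a * q ^ n)) * qPoch q (x / a) n) := by
  have shift_up : (x - a) * qPoch q (q * x / a) (n + 1)
      = -a * (qPoch q (x / a) n * (1 - x / a * q ^ n) * (1 - x / a * q ^ (n + 1))) := by
    have factor_eq : x - a = -a * (1 - x / a) := by field_simp; ring
    rw [mul_div_assoc, factor_eq, mul_assoc, ← qPoch_succ', qPoch_succ, qPoch_succ]
  have shift_down : qPoch q (x / q / a) (n + 1) = (1 - x / q / a) * qPoch q (x / a) n := by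
    rw [qPoch_succ', ← mul_div_assoc, mul_div_cancel₀ x hq]
  rw [confOp_apply, mul_right_comm, shift_up, shift_down, qPoch_succ]
  field_simp
  ring

lemma confOp_sum_qPoch {q a h Q : ℝ} (hq : q ≠ 0) (ha : a ≠ 0) (hh : h ≠ 0) (b x : ℝ)
    (c : ℕ → ℝ) (N : ℕ)
    (hc : ∀ n < N, (1 - q ^ (n + 1)) * (b / h * (1 - h / a * q ^ n)) * c (n + 1)
      = (Q - q ^ n) * c n) :
    confOp q a b h Q (∑ n ∈ Finset.range (N + 1), c n • fun x ↦ qPoch q (x / a) n) x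
      = x ^ 2 * ((q ^ N - Q) * c N * qPoch q (x / a) N) := by
  induction N with
  | zero =>
    rw [zero_add, Finset.sum_range_one, map_smul, Pi.smul_apply, smul_eq_mul,
      confOp_qPoch_zero q a b Q x hh, qPoch, Finset.prod_range_zero]
    ring
  | succ N ih =>
    rw [Finset.sum_range_succ, map_add, map_smul, Pi.add_apply, Pi.smul_apply, smul_eq_mul,
      ih fun n hn ↦ hc n (by lia), confOp_qPoch_succ hq ha hh]
    linear_combination x ^ 2 * qPoch q (x / a) N * hc N N.lt_succ_self

lemma confOp_sum_qHypCoeff {q a b h : ℝ} {N : ℕ} (hq : q ≠ 0) (hqN : ∀ n < N, q ^ (n + 1) ≠ 1)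
    (ha : a ≠ 0) (hb : b ≠ 0) (hh : h ≠ 0) (hden : ∀ n < N, h / a * q ^ n ≠ 1) (x : ℝ) :
    confOp q a b h (q ^ N) (fun x ↦ ∑ n ∈ Finset.range (N + 1),
      qHypCoeff q (q ^ N)⁻¹ (h / a) (q ^ N * (h / b)) n * qPoch q (x / a) n) x = 0 := by
  have recurrence (n : ℕ) (hn : n < N) :=
    qHypCoeff_succ (sub_ne_zero.2 (hqN n hn).symm) (sub_ne_zero.2 (hden n hn).symm)
      (q ^ N)⁻¹ (q ^ N * (h / b))
  set c := qHypCoeff q (q ^ N)⁻¹ (h / a) (q ^ N * (h / b))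
  have telescoped := confOp_sum_qPoch (Q := q ^ N) hq ha hh b x c N fun n hn ↦ by
    calc (1 - q ^ (n + 1)) * (b / h * (1 - h / a * q ^ n)) * c (n + 1)
        = b / h * (q ^ N * (h / b) * (1 - (q ^ N)⁻¹ * q ^ n) * c n) := by
          rw [← recurrence n hn]; ring
      _ = (q ^ N - q ^ n) * c n := by field_simp
  rw [sub_self, zero_mul, zero_mul, mul_zero] at telescoped
  convert telescoped using 2
  ext y
  simp only [Finset.sum_apply, Pi.smul_apply, smul_eq_mul]

lemma confOp_rpow_apply {q t₁ : ℝ} (hq : 0 < q) (ht₁ : t₁ ≠ 0) (h₁ l₁ l₂ t₂ Q : ℝ) (f : ℝ → ℝ)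
    (x : ℝ) :
    confOp q (q ^ (l₁ - 1/2) * t₁) (q ^ (l₂ - 1/2) * t₂) (q ^ (h₁ + 1/2) * t₁) Q f x =
      (x - q ^ (l₁ - 1/2) * t₁) * (x - q ^ (l₂ - 1/2) * t₂) * f (q * x)
        - q ^ (l₁ + l₂ - h₁ - 1/2) * t₂ * (x - q ^ (h₁ + 1/2) * t₁) * f (x / q)
        - (Q * x ^ 2 - (q ^ (l₁ - 1/2) * t₁ + (q ^ (l₂ - 1/2) + q ^ (l₁ + l₂ - h₁ - 1/2)) * t₂) * x
            + q ^ (l₁ + l₂ - 1) * (1 + q) * t₁ * t₂) * f x := by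
  have constant : q ^ (l₁ - 1/2) * q ^ (l₂ - 1/2) = q ^ (l₁ + l₂ - 1) := by
    rw [← Real.rpow_add hq]; ring_nf
  have ratio : q ^ (l₁ - 1/2) * t₁ * (q ^ (l₂ - 1/2) * t₂) * q / (q ^ (h₁ + 1/2) * t₁)
      = q ^ (l₁ + l₂ - h₁ - 1/2) * t₂ := by
    have : q ^ (l₁ + l₂ - 1) * q = q ^ (l₁ + l₂ - h₁ - 1/2) * q ^ (h₁ + 1/2) := by
      rw [← Real.rpow_add hq, ← Real.rpow_add_one hq.ne']; ring_nf
    rw [div_eq_iff (mul_ne_zero (Real.rpow_pos_of_pos hq _).ne' ht₁)]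
    linear_combination t₁ * t₂ * q * constant + t₁ * t₂ * this
  rw [confOp_apply, ratio, ← constant]
  ring

lemma confEq21_rpow_mul_iff {q t₁ : ℝ} (hq : 0 < q) (ht₁ : t₁ ≠ 0) (h₁ l₁ l₂ α₁ lam t₂ : ℝ)
    (f : ℝ → ℝ) :
    confEq21 q h₁ l₁ l₂ α₁ lam t₁ t₂ (fun x ↦ x ^ lam * f x) ↔
      ∀ x, 0 < x → confOp q (q ^ (l₁ - 1/2) * t₁) (q ^ (l₂ - 1/2) * t₂) (q ^ (h₁ + 1/2) * t₁)
        (q ^ (-(lam + α₁))) f x = 0 := by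
  have quadratic : q ^ (-α₁) = q ^ lam * q ^ (-(lam + α₁)) := by
    rw [← Real.rpow_add hq]; ring_nf
  have linear₁ : q ^ (l₁ + l₂ + lam - 1/2) * q ^ (-l₂) = q ^ lam * q ^ (l₁ - 1/2) := by
    simp only [← Real.rpow_add hq]; ring_nf
  have linear₂ : q ^ (l₁ + l₂ + lam - 1/2) * q ^ (-l₁) = q ^ lam * q ^ (l₂ - 1/2) := by
    simp only [← Real.rpow_add hq]; ring_nf
  have linear₃ : q ^ (l₁ + l₂ + lam - 1/2) * q ^ (-h₁) = q ^ lam * q ^ (l₁ + l₂ - h₁ - 1/2) := by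
    simp only [← Real.rpow_add hq]; ring_nf
  have constant : q ^ (l₁ + l₂ + lam) * (1 + q⁻¹) = q ^ lam * (q ^ (l₁ + l₂ - 1) * (1 + q)) := by
    rw [show l₁ + l₂ + lam = lam + (l₁ + l₂ - 1) + 1 by ring, Real.rpow_add_one hq.ne',
      Real.rpow_add hq]
    linear_combination q ^ lam * q ^ (l₁ + l₂ - 1) * mul_inv_cancel₀ hq.ne'
  have down_shift : q ^ (-h₁ + l₁ + l₂ + 2 * lam - 1/2)
      = q ^ lam * (q ^ lam * q ^ (l₁ + l₂ - h₁ - 1/2)) := by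
    simp only [← Real.rpow_add hq]; ring_nf
  refine forall₂_congr fun x hx ↦ ?_
  have gauge_up : (q * x) ^ lam = q ^ lam * x ^ lam := Real.mul_rpow hq.le hx.le
  have gauge_down : q ^ lam * (x / q) ^ lam = x ^ lam := by
    rw [← Real.mul_rpow hq.le (by positivity), mul_div_cancel₀ x hq.ne']
  have gauge_ne_zero : q ^ lam * x ^ lam ≠ 0 := by positivity
  refine Iff.trans (Eq.congr_left ?_) (mul_eq_zero_iff_left gauge_ne_zero)
  beta_reduce
  rw [confOp_rpow_apply hq ht₁, gauge_up, down_shift, quadratic]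
  linear_combination
    -q ^ lam * q ^ (l₁ + l₂ - h₁ - 1/2) * t₂ * (x - q ^ (h₁ + 1/2) * t₁) * f (x / q) * gauge_down
      + x * x ^ lam * f x * (t₁ * linear₁ + t₂ * linear₂ + t₂ * linear₃)
      - t₁ * t₂ * x ^ lam * f x * constant

lemma rpow_mul_div_eq_rpow_mul {q : ℝ} (hq : 0 < q) (h₁ l s t₁ t : ℝ) :
    q ^ (s + h₁ - l + 1) * t₁ / t = q ^ s * (q ^ (h₁ + 1/2) * t₁ / (q ^ (l - 1/2) * t)) := by
  rw [mul_div_mul_comm, ← Real.rpow_sub hq, ← mul_assoc, ← Real.rpow_add hq, mul_div_assoc]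
  ring_nf

theorem stmt11 (q h₁ l₁ l₂ α₁ lam t₁ t₂ lᵢ lᵢ' tᵢ tᵢ' : ℝ) (N : ℕ)
    (hq : 0 < q) (hq1 : q ≠ 1) (ht₁ : t₁ ≠ 0) (ht₂ : t₂ ≠ 0)
    (hidx : (lᵢ, lᵢ', tᵢ, tᵢ') = (l₁, l₂, t₁, t₂) ∨ (lᵢ, lᵢ', tᵢ, tᵢ') = (l₂, l₁, t₂, t₁))
    (hN : 0 < N) (hNlam : lam + α₁ = -(N : ℝ))
    (hden : ∀ n : ℕ, 1 ≤ n → n ≤ N → q ^ (h₁ - lᵢ + (n : ℝ)) * t₁ / tᵢ ≠ 1) :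
    confEq21 q h₁ l₁ l₂ α₁ lam t₁ t₂ (fun x =>
      x ^ lam * ∑ n ∈ Finset.range (N + 1),
        (q ^ (-lam - α₁ + h₁ - lᵢ' + 1) * t₁ / tᵢ') ^ n *
            (qPoch q (q ^ (lam + α₁)) n /
              (qPoch q (q ^ (h₁ - lᵢ + 1) * t₁ / tᵢ) n * qPoch q q n)) *
          qPoch q (x / (q ^ (lᵢ - 1/2) * tᵢ)) n) := by
  have rpow_ne_zero (s : ℝ) : q ^ s ≠ 0 := (Real.rpow_pos_of_pos hq s).ne'
  obtain ⟨htᵢ, htᵢ', op_eq⟩ : tᵢ ≠ 0 ∧ tᵢ' ≠ 0 ∧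
      confOp q (q ^ (l₁ - 1/2) * t₁) (q ^ (l₂ - 1/2) * t₂)
        = confOp q (q ^ (lᵢ - 1/2) * tᵢ) (q ^ (lᵢ' - 1/2) * tᵢ') := by
    rcases hidx with h | h <;> obtain ⟨rfl, rfl, rfl, rfl⟩ := by simpa only [Prod.mk.injEq] using h
    · exact ⟨ht₁, ht₂, rfl⟩
    · exact ⟨ht₂, ht₁, funext₂ (confOp_comm q _ _)⟩
  have param_eq := rpow_mul_div_eq_rpow_mul hq h₁
  have lower_eq : q ^ (h₁ - lᵢ + 1) * t₁ / tᵢ = q ^ (h₁ + 1/2) * t₁ / (q ^ (lᵢ - 1/2) * tᵢ) := by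
    simpa using param_eq lᵢ 0 t₁ tᵢ
  rw [confEq21_rpow_mul_iff hq ht₁, op_eq, ← neg_add', param_eq, lower_eq, hNlam, neg_neg,
    Real.rpow_neg hq.le, Real.rpow_natCast]
  refine fun x _ ↦ confOp_sum_qHypCoeff hq.ne' (fun n _ h ↦ hq1 ?_)
    (mul_ne_zero (rpow_ne_zero _) htᵢ) (mul_ne_zero (rpow_ne_zero _) htᵢ')
    (mul_ne_zero (rpow_ne_zero _) ht₁) (fun n hn ↦ ?_) x
  · exact (pow_eq_one_iff_of_nonneg hq.le n.succ_ne_zero).1 h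
  · rw [mul_comm, ← Real.rpow_natCast, ← param_eq]
    convert hden (n + 1) (by lia) (by lia) using 4
    push_cast
    ring
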